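/- arXiv:2107.01689 — 2 statements merged into one kernel-verified Lean document; each statement's English description precedes it below -/
import Mathlib

section
/- For every R > 0, the minimax regret of the instance equals R/2: min over a ∈ [0,1] of (sup over p ∈ [0,1]×[0,1] of L_R(a, p)) = R/2, and the minimum is attained uniquely at a = 1/2. -/
/-- Nature's parameter space: the unit square `[0,1] × [0,1]`. -/
def unitSq : Set (ℝ × ℝ) := Set.Icc 0 1 ×ˢ Set.Icc 0 1

/-- Agent's expected reward `G_R(a, p) = R·(a·p_A + (1 − a)·p_B)`. -/
noncomputable def reward (R a : ℝ) (p : ℝ × ℝ) : ℝ := R * (a * p.1 + (1 - a) * p.2)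

/-- Regret `L_R(a, p) = R·max(p_A, p_B) − G_R(a, p)`. -/
noncomputable def regret (R a : ℝ) (p : ℝ × ℝ) : ℝ := R * max p.1 p.2 - reward R a p

/-- Max regret of policy `a`: `sup_{p ∈ [0,1]²} L_R(a, p)`. -/
noncomputable def maxRegret (R a : ℝ) : ℝ := sSup (regret R a '' unitSq)

/-! The regret depends on `p` only through the gap `d = p_A - p_B`: acting on the worse arm, which
has probability `1 - a` or `a` according to the sign of `d`, costs `R * |d|`. Nature therefore does
best at `(1, 0)` or `(0, 1)`, and the larger of the two resulting costs, `R * max a (1 - a)`,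
exceeds `R / 2` by `R * |a - 1 / 2|`. -/

theorem regret_eq_posPart_negPart (R a : ℝ) (p : ℝ × ℝ) :
    regret R a p = R * ((1 - a) * (p.1 - p.2)⁺ + a * (p.1 - p.2)⁻) := by
  have hmax : max p.1 p.2 = p.2 + (p.1 - p.2)⁺ := sup_eq_add_posPart_sub _ _
  have hgap : (p.1 - p.2)⁺ - (p.1 - p.2)⁻ = p.1 - p.2 := posPart_sub_negPart _
  rw [regret, reward, hmax]
  linear_combination R * a * hgap

theorem abs_sub_le_one_of_mem_unitSq {p : ℝ × ℝ} (hp : p ∈ unitSq) : |p.1 - p.2| ≤ 1 := by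
  obtain ⟨⟨hA₀, hA₁⟩, hB₀, hB₁⟩ := hp
  exact abs_sub_le_iff.mpr ⟨by linarith, by linarith⟩

theorem max_one_sub_eq_half_add_abs (a : ℝ) : max a (1 - a) = 1 / 2 + |a - 1 / 2| := by
  rw [abs_eq_max_neg, ← max_add_add_left]
  congr 1 <;> ring

theorem regret_le_mul_max {R : ℝ} (hR : 0 ≤ R) (a : ℝ) {p : ℝ × ℝ} (hp : p ∈ unitSq) :
    regret R a p ≤ R * max a (1 - a) := by
  have hmax : 0 ≤ max a (1 - a) := by
    rw [max_one_sub_eq_half_add_abs]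
    positivity
  rw [regret_eq_posPart_negPart]
  gcongr
  calc (1 - a) * (p.1 - p.2)⁺ + a * (p.1 - p.2)⁻
      ≤ max a (1 - a) * (p.1 - p.2)⁺ + max a (1 - a) * (p.1 - p.2)⁻ := by
        gcongr
        · exact le_max_right _ _
        · exact le_max_left _ _
    _ = max a (1 - a) * |p.1 - p.2| := by rw [← mul_add, posPart_add_negPart]
    _ ≤ max a (1 - a) := mul_le_of_le_one_right hmax (abs_sub_le_one_of_mem_unitSq hp)

theorem isGreatest_regret_image_unitSq {R : ℝ} (hR : 0 ≤ R) (a : ℝ) :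
    IsGreatest (regret R a '' unitSq) (R * max a (1 - a)) := by
  refine ⟨?_, Set.forall_mem_image.mpr fun p hp => regret_le_mul_max hR a hp⟩
  rcases max_choice a (1 - a) with h | h <;> rw [h]
  · exact ⟨(0, 1), by simp [unitSq], by simp [regret_eq_posPart_negPart]⟩
  · exact ⟨(1, 0), by simp [unitSq], by simp [regret_eq_posPart_negPart]⟩

theorem maxRegret_eq_half_add_abs {R : ℝ} (hR : 0 ≤ R) (a : ℝ) :
    maxRegret R a = R / 2 + R * |a - 1 / 2| := by
  rw [maxRegret, (isGreatest_regret_image_unitSq hR a).csSup_eq, max_one_sub_eq_half_add_abs]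
  ring

theorem half_le_maxRegret {R : ℝ} (hR : 0 ≤ R) (a : ℝ) : R / 2 ≤ maxRegret R a := by
  rw [maxRegret_eq_half_add_abs hR]
  exact le_add_of_nonneg_right (by positivity)

theorem maxRegret_eq_half_iff {R : ℝ} (hR : 0 < R) {a : ℝ} :
    maxRegret R a = R / 2 ↔ a = 1 / 2 := by
  rw [maxRegret_eq_half_add_abs hR.le, add_eq_left, mul_eq_zero_iff_left hR.ne', abs_eq_zero,
    sub_eq_zero]

theorem minimax_regret_general {R : ℝ} (hR : 0 < R) {A : Set ℝ} (hA : 1 / 2 ∈ A) :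
    IsLeast (maxRegret R '' A) (R / 2) ∧
    maxRegret R (1 / 2) = R / 2 ∧
    ∀ a ∈ A, maxRegret R a = R / 2 → a = 1 / 2 := by
  have hhalf : maxRegret R (1 / 2) = R / 2 := (maxRegret_eq_half_iff hR).mpr rfl
  have hlower : R / 2 ∈ lowerBounds (maxRegret R '' A) :=
    Set.forall_mem_image.mpr fun a _ => half_le_maxRegret hR.le a
  exact ⟨⟨⟨1 / 2, hA, hhalf⟩, hlower⟩, hhalf, fun a _ => (maxRegret_eq_half_iff hR).mp⟩

/-- for every `R > 0`, the minimax regret equals `R/2`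
(`R/2` is the least value of `a ↦ maxRegret R a` over `a ∈ [0,1]` and is attained),
and the minimum is attained uniquely at `a = 1/2`. -/
theorem minimax_regret (R : ℝ) (hR : 0 < R) :
    IsLeast ((fun a => maxRegret R a) '' Set.Icc (0 : ℝ) 1) (R / 2) ∧
    maxRegret R (1 / 2) = R / 2 ∧
    ∀ a ∈ Set.Icc (0 : ℝ) 1, maxRegret R a = R / 2 → a = 1 / 2 :=
  minimax_regret_general hR ⟨by norm_num, by norm_num⟩
end

section
/- Finite convergence of the double oracle to a minimax regret-optimal policy (Proposition 3): suppose given sequences of nonempty finite subsets Π_k ⊆ Π and Ω_k ⊆ Ω, mixed strategies σ_k on Π_k and τ_k on Ω_k such that (σ_k, τ_k) is a Nash equilibrium of the restricted regret game on Π_k × Ω_k, and pure best responses π_k ∈ Π attaining min over π ∈ Π of Σ_ω τ_k(ω)·u(π, ω) and ω_k ∈ Ω attaining max over ω ∈ Ω of Σ_π σ_k(π)·u(π, ω), with Π_{k+1} = Π_k ∪ {π_k} and Ω_{k+1} = Ω_k ∪ {ω_k}. Then there exists k ≤ |Π| + |Ω| such that (σ_k, τ_k) is a Nash equilibrium of the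 full regret game; in particular σ_k is minimax regret-optimal: max over ω ∈ Ω of Σ_π σ_k(π)·u(π, ω) = min over all mixed strategies σ on Π of max over ω ∈ Ω of Σ_π σ(π)·u(π, ω). -/
/-- A mixed strategy supported on the subset `S` of a finite type: nonnegative weights
summing to 1 that vanish outside `S`. -/
def IsMixedOn {α : Type*} [Fintype α] (S : Finset α) (σ : α → ℝ) : Prop :=
  (∀ x, 0 ≤ σ x) ∧ (∑ x, σ x = 1) ∧ ∀ x ∉ S, σ x = 0

/-- Expected regret `U(σ, τ) = Σ_{π, ω} σ(π)·τ(ω)·u(π, ω)` of mixed strategies. -/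
def expRegret {P O : Type*} [Fintype P] [Fintype O] (u : P → O → ℝ)
    (σ : P → ℝ) (τ : O → ℝ) : ℝ :=
  ∑ π, ∑ ω, σ π * τ ω * u π ω

/-- `(σ, τ)` is a Nash equilibrium of the regret game restricted to `P' × O'`. -/
def NashOn {P O : Type*} [Fintype P] [Fintype O] (u : P → O → ℝ)
    (P' : Finset P) (O' : Finset O) (σ : P → ℝ) (τ : O → ℝ) : Prop :=
  IsMixedOn P' σ ∧ IsMixedOn O' τ ∧
    (∀ τ', IsMixedOn O' τ' → expRegret u σ τ' ≤ expRegret u σ τ) ∧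
    (∀ σ', IsMixedOn P' σ' → expRegret u σ τ ≤ expRegret u σ' τ)

/-!
The strategy sets only grow inside `P` and `O`, so within `|P| + |O|` steps there is a step at which
neither of them grows. Then both best responses, taken against *all* pure strategies, already belong
to the restricted sets, so the equilibrium inequalities of the restricted game bound every pure
deviation. Expected regret is affine in each mixed strategy, hence every mixed deviation is bounded
as well.
-/

open Finset

section Stabilization

theorem exists_le_apply_succ_le {f : ℕ → ℕ} {N : ℕ} (hN : f (N + 1) ≤ N) :
    ∃ k ≤ N, f (k + 1) ≤ f k := by
  by_contra! h
  have hf : StrictMonoOn f (Set.Iic (N + 1)) :=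
    strictMonoOn_Iic_of_lt_succ fun k hk => h k (Nat.lt_succ_iff.mp hk)
  have : N + 1 ≤ f (N + 1) := hf.Iic_id_le (N + 1) le_rfl
  omega

theorem exists_le_card_apply_succ_eq_of_monotone {γ : Type*} [Fintype γ] {s : ℕ → Finset γ}
    (hs : Monotone s) : ∃ k ≤ Fintype.card γ, s (k + 1) = s k := by
  obtain ⟨k, hk, hcard⟩ := exists_le_apply_succ_le (f := fun k => #(s k)) (card_le_univ _)
  exact ⟨k, hk, (eq_of_subset_of_card_le (hs k.le_succ) hcard).symm⟩

theorem exists_le_card_add_card_mem_and_mem {α β : Type*} [Fintype α] [Fintype β]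
    [DecidableEq α] [DecidableEq β] {A : ℕ → Finset α} {B : ℕ → Finset β} {a : ℕ → α} {b : ℕ → β}
    (hA : ∀ k, insert (a k) (A k) ⊆ A (k + 1)) (hB : ∀ k, insert (b k) (B k) ⊆ B (k + 1)) :
    ∃ k ≤ Fintype.card α + Fintype.card β, a k ∈ A k ∧ b k ∈ B k := by
  have hmono : Monotone fun k => (A k).disjSum (B k) := monotone_nat_of_le_succ fun k =>
    disjSum_mono ((subset_insert _ _).trans (hA k)) ((subset_insert _ _).trans (hB k))
  obtain ⟨k, hk, heq⟩ := exists_le_card_apply_succ_eq_of_monotone hmono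
  have ha : Sum.inl (a k) ∈ (A k).disjSum (B k) :=
    heq ▸ inl_mem_disjSum.mpr (hA k (mem_insert_self _ _))
  have hb : Sum.inr (b k) ∈ (A k).disjSum (B k) :=
    heq ▸ inr_mem_disjSum.mpr (hB k (mem_insert_self _ _))
  exact ⟨k, Fintype.card_sum (α := α) (β := β) ▸ hk, inl_mem_disjSum.mp ha, inr_mem_disjSum.mp hb⟩

end Stabilization

namespace IsMixedOn

variable {α : Type*} [Fintype α] {S T : Finset α} {σ : α → ℝ}

theorem mono (h : IsMixedOn S σ) (hST : S ⊆ T) : IsMixedOn T σ :=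
  ⟨h.1, h.2.1, fun x hx => h.2.2 x fun hxS => hx (hST hxS)⟩

theorem single [DecidableEq α] {a : α} (ha : a ∈ S) : IsMixedOn S (Pi.single a 1) := by
  have hnonneg : (0 : α → ℝ) ≤ Pi.single a 1 := Pi.single_nonneg.mpr zero_le_one
  exact ⟨hnonneg, by simp, fun x hx => Pi.single_eq_of_ne (ne_of_mem_of_not_mem ha hx).symm 1⟩

theorem sum_smul_mem {E : Type*} [AddCommGroup E] [Module ℝ E] {C : Set E} {f : α → E}
    (h : IsMixedOn S σ) (hC : Convex ℝ C) (hf : ∀ x ∈ S, f x ∈ C) : ∑ x, σ x • f x ∈ C := by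
  have sum_eq : ∑ x ∈ S, σ x = 1 :=
    (sum_subset (subset_univ S) fun x _ hx => h.2.2 x hx).trans h.2.1
  have sum_smul_eq : ∑ x ∈ S, σ x • f x = ∑ x, σ x • f x :=
    sum_subset (subset_univ S) fun x _ hx => by rw [h.2.2 x hx, zero_smul]
  exact sum_smul_eq ▸ hC.sum_mem (fun x _ => h.1 x) sum_eq hf

theorem sum_mul_le {f : α → ℝ} {c : ℝ} (h : IsMixedOn S σ) (hf : ∀ x ∈ S, f x ≤ c) :
    ∑ x, σ x * f x ≤ c :=
  h.sum_smul_mem (convex_Iic c) hf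

theorem le_sum_mul {f : α → ℝ} {c : ℝ} (h : IsMixedOn S σ) (hf : ∀ x ∈ S, c ≤ f x) :
    c ≤ ∑ x, σ x * f x :=
  h.sum_smul_mem (convex_Ici c) hf

end IsMixedOn

section RegretGame

variable {P O : Type*} [Fintype P] [Fintype O] {u : P → O → ℝ} {P' : Finset P} {O' : Finset O}
  {σ : P → ℝ} {τ : O → ℝ}

theorem expRegret_eq_sum_left (u : P → O → ℝ) (σ : P → ℝ) (τ : O → ℝ) :
    expRegret u σ τ = ∑ π, σ π * ∑ ω, τ ω * u π ω := by
  simp only [expRegret, mul_sum, mul_assoc]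

theorem expRegret_eq_sum_right (u : P → O → ℝ) (σ : P → ℝ) (τ : O → ℝ) :
    expRegret u σ τ = ∑ ω, τ ω * ∑ π, σ π * u π ω := by
  rw [expRegret, sum_comm]
  simp only [mul_sum, mul_assoc, mul_left_comm]

theorem expRegret_single_left [DecidableEq P] (u : P → O → ℝ) (π : P) (τ : O → ℝ) :
    expRegret u (Pi.single π 1) τ = ∑ ω, τ ω * u π ω := by
  simp [expRegret_eq_sum_left, Pi.single_apply]

theorem expRegret_single_right [DecidableEq O] (u : P → O → ℝ) (σ : P → ℝ) (ω : O) :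
    expRegret u σ (Pi.single ω 1) = ∑ π, σ π * u π ω := by
  simp [expRegret_eq_sum_right, Pi.single_apply]

theorem forall_expRegret_le_iff {c : ℝ} :
    (∀ τ, IsMixedOn O' τ → expRegret u σ τ ≤ c) ↔ ∀ ω ∈ O', ∑ π, σ π * u π ω ≤ c := by
  classical
  refine ⟨fun h ω hω => ?_, fun h τ hτ => ?_⟩
  · exact expRegret_single_right u σ ω ▸ h _ (.single hω)
  · exact expRegret_eq_sum_right u σ τ ▸ hτ.sum_mul_le h

theorem forall_le_expRegret_iff {c : ℝ} :
    (∀ σ, IsMixedOn P' σ → c ≤ expRegret u σ τ) ↔ ∀ π ∈ P', c ≤ ∑ ω, τ ω * u π ω := by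
  classical
  refine ⟨fun h π hπ => ?_, fun h σ hσ => ?_⟩
  · exact expRegret_single_left u π τ ▸ h _ (.single hπ)
  · exact expRegret_eq_sum_left u σ τ ▸ hσ.le_sum_mul h

theorem nashOn_iff_pure_deviations :
    NashOn u P' O' σ τ ↔ IsMixedOn P' σ ∧ IsMixedOn O' τ ∧
      (∀ ω ∈ O', ∑ π, σ π * u π ω ≤ expRegret u σ τ) ∧
      (∀ π ∈ P', expRegret u σ τ ≤ ∑ ω, τ ω * u π ω) := by
  rw [NashOn, forall_expRegret_le_iff, forall_le_expRegret_iff]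

theorem NashOn.univ_of_bestResponse_mem {π₀ : P} {ω₀ : O} (h : NashOn u P' O' σ τ)
    (hπ₀ : π₀ ∈ P') (hω₀ : ω₀ ∈ O')
    (hπ_best : ∀ π, ∑ ω, τ ω * u π₀ ω ≤ ∑ ω, τ ω * u π ω)
    (hω_best : ∀ ω, ∑ π, σ π * u π ω ≤ ∑ π, σ π * u π ω₀) :
    NashOn u univ univ σ τ := by
  obtain ⟨hσ, hτ, hO, hP⟩ := nashOn_iff_pure_deviations.mp h
  exact nashOn_iff_pure_deviations.mpr ⟨hσ.mono (subset_univ _), hτ.mono (subset_univ _),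
    fun ω _ => (hω_best ω).trans (hO ω₀ hω₀), fun π _ => (hP π₀ hπ₀).trans (hπ_best π)⟩

/-- The worst-case regret `max_ω Σ_π σ(π)·u(π, ω)` of an agent strategy `σ`, the objective of
minimax regret. Pure settings `ω` suffice because regret is affine in the strategy of nature. -/
noncomputable def worstCaseRegret [Nonempty O] (u : P → O → ℝ) (σ : P → ℝ) : ℝ :=
  univ.sup' univ_nonempty fun ω => ∑ π, σ π * u π ω

theorem IsMixedOn.expRegret_le_worstCaseRegret [Nonempty O] (hτ : IsMixedOn O' τ)
    (u : P → O → ℝ) (σ : P → ℝ) : expRegret u σ τ ≤ worstCaseRegret u σ :=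
  forall_expRegret_le_iff.mpr (fun ω _ => le_sup' (fun ω => ∑ π, σ π * u π ω) (mem_univ ω)) τ hτ

theorem NashOn.isLeast_worstCaseRegret [Nonempty O] (h : NashOn u P' univ σ τ) :
    IsLeast {x | ∃ σ', IsMixedOn P' σ' ∧ x = worstCaseRegret u σ'} (worstCaseRegret u σ) := by
  obtain ⟨hσ, hτ, hO, hP⟩ := h
  refine ⟨⟨σ, hσ, rfl⟩, ?_⟩
  rintro _ ⟨σ', hσ', rfl⟩
  calc worstCaseRegret u σ
      ≤ expRegret u σ τ := sup'_le _ _ (forall_expRegret_le_iff.mp hO)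
    _ ≤ expRegret u σ' τ := hP σ' hσ'
    _ ≤ worstCaseRegret u σ' := hτ.expRegret_le_worstCaseRegret u σ'

end RegretGame

/-- finite convergence of the double oracle to a minimax regret-optimal
policy (Proposition 3). Given restricted Nash equilibria `(σ_k, τ_k)` on `Π_k × Ω_k`,
pure best responses `π_k`, `ω_k` over the full strategy spaces, and
`Π_{k+1} = Π_k ∪ {π_k}`, `Ω_{k+1} = Ω_k ∪ {ω_k}`, there is `k ≤ |Π| + |Ω|` such that
`(σ_k, τ_k)` is a Nash equilibrium of the full regret game; in particular `σ_k` is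
minimax regret-optimal. -/
theorem double_oracle_finite_convergence {P O : Type*} [Fintype P] [Fintype O]
    [Nonempty P] [Nonempty O] [DecidableEq P] [DecidableEq O] (u : P → O → ℝ)
    (Pk : ℕ → Finset P) (Ok : ℕ → Finset O)
    (σk : ℕ → P → ℝ) (τk : ℕ → O → ℝ) (πb : ℕ → P) (ωb : ℕ → O)
    (hNash : ∀ k, NashOn u (Pk k) (Ok k) (σk k) (τk k))
    (hπb : ∀ k, ∀ π : P, ∑ ω, τk k ω * u (πb k) ω ≤ ∑ ω, τk k ω * u π ω)
    (hωb : ∀ k, ∀ ω : O, ∑ π, σk k π * u π ω ≤ ∑ π, σk k π * u π (ωb k))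
    (hPk : ∀ k, Pk (k + 1) = insert (πb k) (Pk k))
    (hOk : ∀ k, Ok (k + 1) = insert (ωb k) (Ok k)) :
    ∃ k ≤ Fintype.card P + Fintype.card O,
      NashOn u Finset.univ Finset.univ (σk k) (τk k) ∧
      Finset.univ.sup' Finset.univ_nonempty (fun ω : O => ∑ π, σk k π * u π ω) =
        sInf {x : ℝ | ∃ σ : P → ℝ, IsMixedOn Finset.univ σ ∧
          x = Finset.univ.sup' Finset.univ_nonempty (fun ω : O => ∑ π, σ π * u π ω)} := by
  obtain ⟨k, hk, hπ_mem, hω_mem⟩ :=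
    exists_le_card_add_card_mem_and_mem (fun k => (hPk k).ge) (fun k => (hOk k).ge)
  have hNash_univ : NashOn u Finset.univ Finset.univ (σk k) (τk k) :=
    (hNash k).univ_of_bestResponse_mem hπ_mem hω_mem (hπb k) (hωb k)
  exact ⟨k, hk, hNash_univ, hNash_univ.isLeast_worstCaseRegret.csInf_eq.symm⟩
end
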